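/- arXiv:1605.07878 — 4 statements merged into one kernel-verified Lean document; each statement's English description precedes it below -/
import Mathlib

section
/- Let x ∈ ℂ with x ≠ 0. Then det (x • (M : Matrix (Fin 12) (Fin 12) ℂ) − x⁻¹ • Mᵀ) = P₀(x), i.e. the determinant equals x¹² − x¹⁰ + x⁶ − x⁴ + 1 − x⁻⁴ + x⁻⁶ − x⁻¹⁰ + x⁻¹². -/
/-!
Put `H = M⁻¹ Mᵀ` (the monodromy of the fibred knot `T(3,7)`). Since `det M = 1`,
`det (x M - y Mᵀ) = det (x - y H)`, so the claim amounts to the characteristic polynomial of `H`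
being the cyclotomic polynomial `Φ₂₁`. The first basis vector `e₀` is a cyclic vector for `H`, and
the integer matrix `B` with columns `e₀, H e₀, …, H¹¹ e₀` is invertible over `ℤ`; it conjugates `H`
to a companion matrix `C`. To avoid inverting `M`, the relation `H B = B C` is stated as
`Mᵀ B = M B C` (`transpose_mul_krylov`), which gives
`(x M - y Mᵀ) B = M B (x - y C)`.

The matrix `x - y C` differs from the bidiagonal matrix `x - y S`, where `S` is the shift, only in
its last column, so for `y = x⁻¹` its determinant is read off from Cramer's rule
(`det_companion_pencil`).
-/

open Matrix

/-- The Seifert matrix `Sₙ` of the knot `Kₙ`. -/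
def Smat (n : ℕ) : Matrix (Fin 14) (Fin 14) ℤ :=
  !![-1, 0, 0, 0, 0, 0, 1, 0, 0, 0, 0, 0, 0, -1;
      1,-1, 0, 0, 0, 0,-1, 1, 0, 0, 0, 0, 0, 0;
      0, 1,-1, 0, 0, 0, 0,-1, 1, 0, 0, 0, 0, 0;
      0, 0, 1,-1, 0, 0, 0, 0,-1, 1, 0, 0, 0, 0;
      0, 0, 0, 1,-1, 0, 0, 0, 0,-1, 1, 0, 0, 0;
      0, 0, 0, 0, 1,-1, 0, 0, 0, 0,-1, 0, 0, 0;
      0, 0, 0, 0, 0, 0,-1, 0, 0, 0, 0, 0, 0, 0;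
      0, 0, 0, 0, 0, 0, 1,-1, 0, 0, 0, 0, 0, 0;
      0, 0, 0, 0, 0, 0, 0, 1,-1, 0, 0, 0, 0, 0;
      0, 0, 0, 0, 0, 0, 0, 0, 1,-1, 0, 0, 0, 0;
      0, 0, 0, 0, 0, 0, 0, 0, 0, 1,-1, 0, 0, 0;
      0, 0, 0, 0, 0, 0, 0, 0, 0, 0, 1,-1, 0, 0;
      0, 0, 0, 0, 0, 0, 0, 0, 0, 0, 0, 0, -(n:ℤ), (n:ℤ);
      0, 0, 0, 0, 0, 0, 0, 0, 0, 0, 0, 0, (n:ℤ)+1, -((n:ℤ)+1)]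

/-- The upper-left 12×12 submatrix of `Sₙ` (independent of `n`): the Seifert
matrix of the torus knot `T(3,7)`. -/
def Mmat : Matrix (Fin 12) (Fin 12) ℤ :=
  (Smat 0).submatrix (Fin.castLE (by omega)) (Fin.castLE (by omega))

/-- `Sₙ` as a complex matrix. -/
def SmatC (n : ℕ) : Matrix (Fin 14) (Fin 14) ℂ := (Smat n).map fun a => (a : ℂ)

/-- `M` as a complex matrix. -/
def MmatC : Matrix (Fin 12) (Fin 12) ℂ := Mmat.map fun a => (a : ℂ)

/-- The Alexander polynomial `Δ_{K₀}` evaluated at `x`. -/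
noncomputable def P0 (x : ℂ) : ℂ :=
  x ^ 12 - x ^ 10 + x ^ 6 - x ^ 4 + 1 - x⁻¹ ^ 4 + x⁻¹ ^ 6 - x⁻¹ ^ 10 + x⁻¹ ^ 12

/-- The Alexander polynomial `Δ_{K₁}` evaluated at `x`. -/
noncomputable def P1 (x : ℂ) : ℂ :=
  2 * x ^ 12 - 3 * x ^ 10 + x ^ 8 + 2 * x ^ 6 - 3 * x ^ 4 + x ^ 2 + 1
    + x⁻¹ ^ 2 - 3 * x⁻¹ ^ 4 + 2 * x⁻¹ ^ 6 + x⁻¹ ^ 8 - 3 * x⁻¹ ^ 10 + 2 * x⁻¹ ^ 12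

/-- The Krylov matrix of `H = M⁻¹ Mᵀ` and `e₀`: its columns are `e₀, H e₀, …, H¹¹ e₀`. -/
def krylov : Matrix (Fin 12) (Fin 12) ℤ :=
  !![1, 0, 0, 0, 0, 0, -1, -1, 0, 0, 0, 0;
     0, 0, 0, 0, 0, 0, 0, -1, 0, 0, 0, 0;
     0, 0, 0, 0, 1, 0, 0, -1, 0, 0, 0, -1;
     0, 0, 0, -1, 0, 0, 0, -1, 0, 0, 1, -1;
     0, 0, 0, 0, 0, 0, 0, -1, 0, 0, 1, 0;
     0, 1, 0, 0, 0, 0, 0, -1, -1, 0, 0, 0;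
     0, -1, 0, 0, 0, 0, -1, 0, 0, 0, 0, 0;
     0, -1, 0, 0, 0, 1, 0, 0, 0, 0, 0, 0;
     0, -1, 0, 0, 0, 0, 0, 0, 0, 0, 0, 0;
     0, -1, 0, -1, 0, 0, 0, 0, 0, 0, 1, 0;
     0, -1, 1, 0, 0, 0, 0, 0, 0, -1, 1, 0;
     0, -1, 0, 0, 0, 0, 0, 0, 0, -1, 0, 0]

/-- The inverse of `krylov`. -/
def krylovInv : Matrix (Fin 12) (Fin 12) ℤ :=
  !![1, -1, 0, 0, 0, 0, -1, 0, 1, 0, 0, 0;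
     0, 0, 0, 0, 0, 0, 0, 0, -1, 0, 0, 0;
     0, 1, 0, 0, -1, 0, 0, 0, 0, 0, 1, -1;
     0, -1, 0, 0, 1, 0, 0, 0, 1, -1, 0, 0;
     0, 0, 1, -1, 0, 0, 0, 0, -1, 1, 0, 0;
     0, 0, 0, 0, 0, 0, 0, 1, -1, 0, 0, 0;
     0, 0, 0, 0, 0, 0, -1, 0, 1, 0, 0, 0;
     0, -1, 0, 0, 0, 0, 0, 0, 0, 0, 0, 0;
     0, 1, 0, 0, 0, -1, 0, 0, -1, 0, 0, 0;
     0, 0, 0, 0, 0, 0, 0, 0, 1, 0, 0, -1;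
     0, -1, 0, 0, 1, 0, 0, 0, 0, 0, 0, 0;
     0, 1, 0, -1, 0, 0, 0, 0, -1, 1, 0, 0]

/-- The last column of the companion matrix of `Φ₂₁`, that is, the coefficients of
`t¹² - Φ₂₁(t)`. -/
def lastCol : Fin 12 → ℤ := ![-1, 1, 0, -1, 1, 0, -1, 0, 1, -1, 0, 1]

/-- The nilpotent shift `eⱼ ↦ eⱼ₊₁`, `e₁₁ ↦ 0`. -/
def shift : Matrix (Fin 12) (Fin 12) ℤ :=
  of fun i j => if i.val = j.val + 1 then 1 else 0

/-- The companion matrix of the cyclotomic polynomial `Φ₂₁`. -/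
def companion : Matrix (Fin 12) (Fin 12) ℤ := shift.updateCol 11 lastCol

theorem krylov_mul_inv : krylov * krylovInv = 1 := by
  decide +kernel

theorem transpose_mul_krylov : Mmatᵀ * krylov = Mmat * krylov * companion := by
  decide +kernel

theorem det_Mmat : Mmat.det = 1 := by
  -- Reversing the order of the basis inside each of the two blocks makes `M` upper triangular.
  let σ : Equiv.Perm (Fin 12) :=
    Function.Involutive.toPerm ![5, 4, 3, 2, 1, 0, 11, 10, 9, 8, 7, 6] (fun i => by revert i; decide)
  have htri : ∀ i j : Fin 12, i ≤ j ∨ Mmat (σ i) (σ j) = 0 := by decide +kernel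
  have hdiag : ∀ i : Fin 12, Mmat (σ i) (σ i) = -1 := by decide +kernel
  have hup : (Mmat.submatrix σ σ).IsUpperTriangular := fun i j h =>
    (htri i j).resolve_left (not_le_of_gt h)
  rw [← det_submatrix_equiv_self σ, det_of_isUpperTriangular hup]
  simp only [submatrix_apply, hdiag]
  simp

theorem det_companion_pencil (x y : ℂ) (hxy : x * y = 1) :
    (x • (1 : Matrix (Fin 12) (Fin 12) ℂ) - y • companion.map (Int.cast : ℤ → ℂ)).det =
      x ^ 12 - x ^ 10 + x ^ 6 - x ^ 4 + 1 - y ^ 4 + y ^ 6 - y ^ 10 + y ^ 12 := by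
  let L : Matrix (Fin 12) (Fin 12) ℂ := x • 1 - y • shift.map (Int.cast : ℤ → ℂ)
  -- The solution of `L *ᵥ g = last column of x - y C`, by forward substitution.
  let g : Fin 12 → ℂ :=
    ![y ^ 2,
     y ^ 4 - y ^ 2,
     y ^ 6 - y ^ 4,
     y ^ 8 - y ^ 6 + y ^ 2,
     y ^ 10 - y ^ 8 + y ^ 4 - y ^ 2,
     y ^ 12 - y ^ 10 + y ^ 6 - y ^ 4,
     y ^ 14 - y ^ 12 + y ^ 8 - y ^ 6 + y ^ 2,
     y ^ 16 - y ^ 14 + y ^ 10 - y ^ 8 + y ^ 4,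
     y ^ 18 - y ^ 16 + y ^ 12 - y ^ 10 + y ^ 6 - y ^ 2,
     y ^ 20 - y ^ 18 + y ^ 14 - y ^ 12 + y ^ 8 - y ^ 4 + y ^ 2,
     y ^ 22 - y ^ 20 + y ^ 16 - y ^ 14 + y ^ 10 - y ^ 6 + y ^ 4,
     1 + y ^ 24 - y ^ 22 + y ^ 18 - y ^ 16 + y ^ 12 - y ^ 8 + y ^ 6 - y ^ 2]
  have hL : x • (1 : Matrix (Fin 12) (Fin 12) ℂ) - y • companion.map (Int.cast : ℤ → ℂ) =
      L.updateCol 11 (L *ᵥ g) := by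
    ext i j
    by_cases hj : j = 11
    · subst hj
      rw [updateCol_self]
      fin_cases i <;>
        simp [L, g, companion, shift, lastCol, mulVec, dotProduct, Fin.sum_univ_succ, one_apply] <;>
        grind
    · simp [L, companion, updateCol_ne hj]
  have hdet : L.det = x ^ 12 := by
    rw [det_of_isLowerTriangular]
    · simp [L, shift]
    · intro i j hij
      have hlt : i < j := hij
      have h2 : i.val ≠ j.val + 1 := by omega
      simp [L, shift, hlt.ne, h2]
  rw [hL, ← cramer_apply, cramer_eq_adjugate_mulVec, mulVec_mulVec, adjugate_mul, hdet,
    smul_mulVec, one_mulVec]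
  simp only [Pi.smul_apply, smul_eq_mul]
  have hg : g 11 = 1 + y ^ 24 - y ^ 22 + y ^ 18 - y ^ 16 + y ^ 12 - y ^ 8 + y ^ 6 - y ^ 2 := rfl
  rw [hg]
  grind

/-- `det(x M - x⁻¹ Mᵀ) = Δ_{K₀}(x)`. -/
theorem stmt6 (x : ℂ) (hx : x ≠ 0) :
    (x • MmatC - x⁻¹ • MmatCᵀ).det = P0 x := by
  let φ : Matrix (Fin 12) (Fin 12) ℤ →+* Matrix (Fin 12) (Fin 12) ℂ :=
    (Int.castRingHom ℂ).mapMatrix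
  have hM : MmatC.det = 1 := by
    have h := (Int.castRingHom ℂ).map_det Mmat
    rw [det_Mmat, map_one] at h
    exact h.symm
  have hB : (φ krylov).det ≠ 0 := by
    have h := congrArg (fun A => (φ A).det) krylov_mul_inv
    simp only [map_mul, map_one, det_mul, det_one] at h
    exact left_ne_zero_of_mul_eq_one h
  have hC : MmatCᵀ * φ krylov = MmatC * φ krylov * φ companion := by
    have h := congrArg φ transpose_mul_krylov
    rw [map_mul, map_mul, map_mul] at h
    exact h
  have key : (x • MmatC - x⁻¹ • MmatCᵀ) * φ krylov =
      MmatC * φ krylov * (x • 1 - x⁻¹ • φ companion) := by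
    rw [sub_mul, smul_mul_assoc, smul_mul_assoc, hC, mul_sub, mul_smul_comm, mul_smul_comm, mul_one]
  have hd := congrArg det key
  rw [det_mul, det_mul, det_mul, hM, one_mul, mul_comm] at hd
  rw [mul_left_cancel₀ hB hd, P0]
  exact det_companion_pencil x x⁻¹ (mul_inv_cancel₀ hx)
end

section
/- Let x ∈ ℂ with x ≠ 0. Then det (x • (S₁ : Matrix (Fin 14) (Fin 14) ℂ) − x⁻¹ • S₁ᵀ) = P₁(x), where S₁ is the matrix Sₙ with n = 1, i.e. the determinant equals 2x¹² − 3x¹⁰ + x⁸ + 2x⁶ − 3x⁴ + x² + 1 + x⁻² − 3x⁻⁴ + 2x⁻⁶ + x⁻⁸ − 3x⁻¹⁰ + 2x⁻¹². -/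
open Matrix

/-!
Put `t = x²`. Scaling by `x` reduces the claim to the determinant of `t S₁ - S₁ᵀ`, which is computed
by two Schur complements along the blocks `14 = (6 + 6) + 2`.

* The trailing `2 × 2` block `D` has determinant `t`, and the off-diagonal blocks next to it have
  one nonzero entry each. Eliminating `D` therefore only adds `1 - t` to the top-left entry of the
  `12 × 12` block `t M - Mᵀ` (`det_schur_blockD`).
* In `6 × 6` blocks `M = [B, -C; 0, B]`, where `B` is bidiagonal of determinant `1` and `C` differs
  from it in the last diagonal entry. Splitting off `diag(B, B)` on the right leaves a sparse matrix
  `[X, -t G; L, Y]`. In it the right halves of rows `0, …, 4` and `10` form a lower triangular block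
  `Q` with determinant `-t⁵`; its Schur complement times `t` is the `6 × 6` polynomial matrix
  `schurT t`, and the powers of `t` combine so that `det (t S₁ - S₁ᵀ) = det (schurT t)`
  (`det_block_T37`).
* This last determinant is sparse and is expanded directly (`det_schurT`).
-/

/-! ### Block structure of the Seifert matrix -/

/-- The lower bidiagonal diagonal block `B` of `M`, a Seifert matrix of `T(2,7)`. -/
def blockBZ : Matrix (Fin 6) (Fin 6) ℤ :=
  !![-1, 0, 0, 0, 0, 0;
      1, -1, 0, 0, 0, 0;
      0, 1, -1, 0, 0, 0;
      0, 0, 1, -1, 0, 0;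
      0, 0, 0, 1, -1, 0;
      0, 0, 0, 0, 1, -1]

/-- `B` as a complex matrix. -/
def blockB : Matrix (Fin 6) (Fin 6) ℂ := blockBZ.map fun a => (a : ℂ)

/-- The coupling block `C = B + e₅ e₅ᵀ`; the upper-right block of `M` is `-C`. -/
def blockC : Matrix (Fin 6) (Fin 6) ℂ := blockB + Matrix.single 5 5 1

/-- The matrix unit `E` at position `(0, 0)`. -/
def unitE : Matrix (Fin 6) (Fin 6) ℂ := Matrix.single 0 0 1

/-- The trailing `2 × 2` block `D` of `t S₁ - S₁ᵀ`. -/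
def blockD (t : ℂ) : Matrix (Fin 2) (Fin 2) ℂ := !![1 - t, t - 2; 2 * t - 1, 2 - 2 * t]

/-- The upper-right block of `t S₁ - S₁ᵀ`: its only nonzero entry is `-t`. -/
def blockU (t : ℂ) : Matrix (Fin 6 ⊕ Fin 6) (Fin 2) ℂ := Matrix.single (Sum.inl 0) 1 (-t)

/-- The lower-left block of `t S₁ - S₁ᵀ`: its only nonzero entry is `1`. -/
def blockV : Matrix (Fin 2) (Fin 6 ⊕ Fin 6) ℂ := Matrix.single 1 (Sum.inl 0) 1

lemma det_blockB : blockB.det = 1 := by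
  have h : blockB.BlockTriangular OrderDual.toDual := by
    intro i j hij
    replace hij : i < j := hij
    fin_cases i <;> fin_cases j <;> first | exact Int.cast_zero | exact absurd hij (by decide)
  rw [Matrix.det_of_isLowerTriangular _ h]
  simp [blockB, blockBZ, Fin.prod_univ_succ]

/-- The splitting `14 = (6 + 6) + 2` of the index set, in increasing order. -/
def blockIdx : (Fin 6 ⊕ Fin 6) ⊕ Fin 2 ≃ Fin 14 :=
  ((finSumFinEquiv (m := 6) (n := 6)).sumCongr (Equiv.refl (Fin 2))).trans
    (finSumFinEquiv (m := 12) (n := 2))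

/-- The block decomposition of `S₁`, checked over the integers. -/
lemma Smat_one_blocks :
    (Smat 1).submatrix blockIdx blockIdx =
      fromBlocks (fromBlocks blockBZ (-(blockBZ + Matrix.single 5 5 1)) 0 blockBZ)
        (Matrix.single (Sum.inl 0) 1 (-1)) 0 !![-1, 1; 2, -2] := by
  decide

lemma reindex_eq (t : ℂ) :
    (t • SmatC 1 - (SmatC 1)ᵀ).submatrix blockIdx blockIdx =
      fromBlocks
        (fromBlocks (t • blockB - blockBᵀ) (-(t • blockC)) blockCᵀ (t • blockB - blockBᵀ))
        (blockU t) blockV (blockD t) := by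
  ext i j
  have hij := congrArg (Int.cast : ℤ → ℂ) (congrFun₂ Smat_one_blocks i j)
  have hji := congrArg (Int.cast : ℤ → ℂ) (congrFun₂ Smat_one_blocks j i)
  rw [Matrix.submatrix_apply] at hij hji
  simp only [Matrix.submatrix_apply, Matrix.sub_apply, Matrix.smul_apply, Matrix.transpose_apply,
    SmatC, Matrix.map_apply, hij, hji]
  rcases i with (i | i) | i <;> rcases j with (j | j) | j <;>
    simp [blockC, blockB, blockU, blockV, blockD, Matrix.single_apply]
  all_goals fin_cases i <;> fin_cases j <;> simp <;> ring

/-! ### Elimination of the trailing block -/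

/-- Eliminating `D` adds `1 - t` to the top-left entry, because `U D⁻¹ V = -(1 - t) E`. -/
lemma det_schur_blockD {t : ℂ} (ht : t ≠ 0) (A : Matrix (Fin 6 ⊕ Fin 6) (Fin 6 ⊕ Fin 6) ℂ) :
    (fromBlocks A (blockU t) blockV (blockD t)).det =
      t * (A + fromBlocks ((1 - t) • unitE) 0 0 0).det := by
  have hdet : (blockD t).det = t := by
    rw [blockD, Matrix.det_fin_two_of]; ring
  have hu : IsUnit (blockD t).det := by rw [hdet]; exact ht.isUnit
  let := Matrix.invertibleOfIsUnitDet _ hu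
  have hUV : blockU t * ⅟(blockD t) * blockV = -fromBlocks ((1 - t) • unitE) 0 0 0 := by
    rw [Matrix.invOf_eq_nonsing_inv, Matrix.inv_def, hdet, Ring.inverse_eq_inv', blockD,
      Matrix.adjugate_fin_two_of, blockU, blockV, unitE]
    ext i j
    rcases i with i | i <;> rcases j with j | j <;>
      simp [Matrix.mul_apply, Fin.sum_univ_two, Matrix.single_apply]
    fin_cases i <;> fin_cases j <;> simp
    field_simp
    simp
  rw [Matrix.det_fromBlocks₂₂, hdet, hUV, sub_neg_eq_add]

/-! ### Reduction to a determinant of size six -/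

/-- The quotient `Y = (t B - Bᵀ) B⁻¹ = t - Bᵀ B⁻¹`. -/
def blockY (t : ℂ) : Matrix (Fin 6) (Fin 6) ℂ :=
  !![t, 1, 0, 0, 0, 0;
     0, t, 1, 0, 0, 0;
     0, 0, t, 1, 0, 0;
     0, 0, 0, t, 1, 0;
     0, 0, 0, 0, t, 1;
     -1, -1, -1, -1, -1, t - 1]

/-- The quotient `X = (t B - Bᵀ + (1 - t) E) B⁻¹ = Y - (1 - t) E`. -/
def blockX (t : ℂ) : Matrix (Fin 6) (Fin 6) ℂ :=
  !![2 * t - 1, 1, 0, 0, 0, 0;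
     0, t, 1, 0, 0, 0;
     0, 0, t, 1, 0, 0;
     0, 0, 0, t, 1, 0;
     0, 0, 0, 0, t, 1;
     -1, -1, -1, -1, -1, t - 1]

/-- The quotient `G = C B⁻¹`. -/
def blockG : Matrix (Fin 6) (Fin 6) ℂ :=
  !![1, 0, 0, 0, 0, 0;
     0, 1, 0, 0, 0, 0;
     0, 0, 1, 0, 0, 0;
     0, 0, 0, 1, 0, 0;
     0, 0, 0, 0, 1, 0;
     -1, -1, -1, -1, -1, 0]

/-- The quotient `L = Cᵀ B⁻¹`. -/
def blockL : Matrix (Fin 6) (Fin 6) ℂ :=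
  !![0, -1, 0, 0, 0, 0;
     0, 0, -1, 0, 0, 0;
     0, 0, 0, -1, 0, 0;
     0, 0, 0, 0, -1, 0;
     0, 0, 0, 0, 0, -1;
     0, 0, 0, 0, 0, 0]

lemma blockY_mul_blockB (t : ℂ) : blockY t * blockB = t • blockB - blockBᵀ := by
  ext i j
  fin_cases i <;> fin_cases j <;>
    simp [blockY, blockB, blockBZ, Matrix.mul_apply, Fin.sum_univ_succ] <;> ring

lemma blockX_mul_blockB (t : ℂ) :
    blockX t * blockB = t • blockB - blockBᵀ + (1 - t) • unitE := by
  ext i j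
  fin_cases i <;> fin_cases j <;>
    simp [blockX, blockB, blockBZ, unitE, Matrix.mul_apply, Fin.sum_univ_succ] <;> ring

lemma blockG_mul_blockB : blockG * blockB = blockC := by
  ext i j
  fin_cases i <;> fin_cases j <;>
    simp [blockG, blockC, blockB, blockBZ, Matrix.mul_apply, Fin.sum_univ_succ]

lemma blockL_mul_blockB : blockL * blockB = blockCᵀ := by
  ext i j
  fin_cases i <;> fin_cases j <;>
    simp [blockL, blockC, blockB, blockBZ, Matrix.mul_apply, Fin.sum_univ_succ]

/-- The pivot block: the right halves of rows `0, …, 4` and `10` of `[X, -t G; L, Y]`. -/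
def pivQ (t : ℂ) : Matrix (Fin 6) (Fin 6) ℂ :=
  !![-t, 0, 0, 0, 0, 0;
     0, -t, 0, 0, 0, 0;
     0, 0, -t, 0, 0, 0;
     0, 0, 0, -t, 0, 0;
     0, 0, 0, 0, -t, 0;
     0, 0, 0, 0, t, 1]

/-- The left halves of rows `0, …, 4` and `10` of `[X, -t G; L, Y]`. -/
def pivP (t : ℂ) : Matrix (Fin 6) (Fin 6) ℂ :=
  !![2 * t - 1, 1, 0, 0, 0, 0;
     0, t, 1, 0, 0, 0;
     0, 0, t, 1, 0, 0;
     0, 0, 0, t, 1, 0;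
     0, 0, 0, 0, t, 1;
     0, 0, 0, 0, 0, -1]

/-- The left halves of rows `6, …, 9`, `5` and `11` of `[X, -t G; L, Y]`. -/
def pivU (t : ℂ) : Matrix (Fin 6) (Fin 6) ℂ :=
  !![0, -1, 0, 0, 0, 0;
     0, 0, -1, 0, 0, 0;
     0, 0, 0, -1, 0, 0;
     0, 0, 0, 0, -1, 0;
     -1, -1, -1, -1, -1, t - 1;
     0, 0, 0, 0, 0, 0]

/-- The right halves of rows `6, …, 9`, `5` and `11` of `[X, -t G; L, Y]`. -/
def pivV (t : ℂ) : Matrix (Fin 6) (Fin 6) ℂ :=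
  !![t, 1, 0, 0, 0, 0;
     0, t, 1, 0, 0, 0;
     0, 0, t, 1, 0, 0;
     0, 0, 0, t, 1, 0;
     t, t, t, t, t, 0;
     -1, -1, -1, -1, -1, t - 1]

/-- The inverse of `pivQ t` for `t ≠ 0`. -/
noncomputable def pivQinv (t : ℂ) : Matrix (Fin 6) (Fin 6) ℂ :=
  !![-t⁻¹, 0, 0, 0, 0, 0;
     0, -t⁻¹, 0, 0, 0, 0;
     0, 0, -t⁻¹, 0, 0, 0;
     0, 0, 0, -t⁻¹, 0, 0;
     0, 0, 0, 0, -t⁻¹, 0;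
     0, 0, 0, 0, 1, 1]

/-- The Schur complement `U - V Q⁻¹ P`, multiplied by `t`. -/
def schurT (t : ℂ) : Matrix (Fin 6) (Fin 6) ℂ :=
  !![2 * t ^ 2 - t, t, 1, 0, 0, 0;
     0, t ^ 2, t, 1, 0, 0;
     0, 0, t ^ 2, t, 1, 0;
     0, 0, 0, t ^ 2, t, 1;
     2 * t ^ 2 - 2 * t, t ^ 2, t ^ 2, t ^ 2, t ^ 2, t ^ 2;
     -2 * t + 1, -t - 1, -t - 1, -t - 1, -t ^ 3 + t ^ 2 - t - 1, -1]

/-- Swapping rows `5` and `10`, and the two halves of the columns, moves the pivot block `Q` to the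
top left. -/
lemma pivot_rows (t : ℂ) :
    (fromBlocks (blockX t) (-(t • blockG)) blockL (blockY t)).submatrix
        (Equiv.swap (Sum.inl 5) (Sum.inr 4)) (Equiv.sumComm (Fin 6) (Fin 6)) =
      fromBlocks (pivQ t) (pivP t) (pivV t) (pivU t) := by
  -- the row swap only has to be evaluated on the twelve concrete indices
  have h5 : Equiv.swap (Sum.inl 5 : Fin 6 ⊕ Fin 6) (Sum.inr 4) (Sum.inl 5) = Sum.inr 4 := by decide
  have h10 : Equiv.swap (Sum.inl 5 : Fin 6 ⊕ Fin 6) (Sum.inr 4) (Sum.inr 4) = Sum.inl 5 := by decide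
  have hl : ∀ i : Fin 6, i ≠ 5 →
      Equiv.swap (Sum.inl 5 : Fin 6 ⊕ Fin 6) (Sum.inr 4) (Sum.inl i) = Sum.inl i := by decide
  have hr : ∀ i : Fin 6, i ≠ 4 →
      Equiv.swap (Sum.inl 5 : Fin 6 ⊕ Fin 6) (Sum.inr 4) (Sum.inr i) = Sum.inr i := by decide
  ext i j
  rw [Matrix.submatrix_apply]
  rcases i with i | i
  · by_cases hi : i = 5
    · subst hi
      rw [h5]
      rcases j with j | j <;> fin_cases j <;> simp [blockL, blockY, pivP, pivQ]
    · rw [hl i hi]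
      rcases j with j | j <;> fin_cases i <;> fin_cases j <;>
        simp [blockX, blockG, pivP, pivQ] at hi ⊢
  · by_cases hi : i = 4
    · subst hi
      rw [h10]
      rcases j with j | j <;> fin_cases j <;> simp [blockX, blockG, pivU, pivV]
    · rw [hr i hi]
      rcases j with j | j <;> fin_cases i <;> fin_cases j <;>
        simp [blockL, blockY, pivU, pivV] at hi ⊢

lemma pivQ_mul_pivQinv {t : ℂ} (ht : t ≠ 0) : pivQ t * pivQinv t = 1 := by
  ext i j
  fin_cases i <;> fin_cases j <;>
    simp [pivQ, pivQinv, Matrix.mul_apply, Fin.sum_univ_succ, ht]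

lemma det_pivQ (t : ℂ) : (pivQ t).det = -t ^ 5 := by
  have h : (pivQ t).IsLowerTriangular := by
    intro i j hij
    replace hij : i < j := hij
    fin_cases i <;> fin_cases j <;> first | rfl | exact absurd hij (by decide)
  rw [Matrix.det_of_isLowerTriangular _ h]
  simp [pivQ, Fin.prod_univ_succ]
  ring

set_option maxHeartbeats 1000000 in
lemma smul_schur {t : ℂ} (ht : t ≠ 0) :
    t • (pivU t - pivV t * pivQinv t * pivP t) = schurT t := by
  have hVQ : t • (pivV t * pivQinv t) =
      !![-t, -1, 0, 0, 0, 0;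
         0, -t, -1, 0, 0, 0;
         0, 0, -t, -1, 0, 0;
         0, 0, 0, -t, -1, 0;
         -t, -t, -t, -t, -t, 0;
         1, 1, 1, 1, t ^ 2 - t + 1, t ^ 2 - t] := by
    ext i j
    fin_cases i <;> fin_cases j <;>
      simp [pivV, pivQinv] <;> field_simp <;> ring
  rw [smul_sub, ← Matrix.smul_mul, hVQ]
  ext i j
  fin_cases i <;> fin_cases j <;>
    simp [pivU, pivP, schurT] <;> ring

/-- Elimination in the `12 × 12` block along the pivot block `Q`. -/
lemma det_block_T37 {t : ℂ} (ht : t ≠ 0) :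
    t * (fromBlocks (t • blockB - blockBᵀ) (-(t • blockC)) blockCᵀ (t • blockB - blockBᵀ) +
        fromBlocks ((1 - t) • unitE) 0 0 0).det = (schurT t).det := by
  have hfac : fromBlocks (t • blockB - blockBᵀ) (-(t • blockC)) blockCᵀ (t • blockB - blockBᵀ) +
      fromBlocks ((1 - t) • unitE) 0 0 0 =
      fromBlocks (blockX t) (-(t • blockG)) blockL (blockY t) * fromBlocks blockB 0 0 blockB := by
    rw [Matrix.fromBlocks_multiply, Matrix.fromBlocks_add]
    simp [blockX_mul_blockB, blockY_mul_blockB, blockG_mul_blockB, blockL_mul_blockB]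
  have hperm : (fromBlocks (pivQ t) (pivP t) (pivV t) (pivU t)).det =
      -(fromBlocks (blockX t) (-(t • blockG)) blockL (blockY t)).det := by
    have hs : Equiv.Perm.sign (Equiv.sumComm (Fin 6) (Fin 6)) = 1 := by decide
    have h1 := Matrix.det_permute' (Equiv.sumComm (Fin 6) (Fin 6))
      (fromBlocks (blockX t) (-(t • blockG)) blockL (blockY t))
    have h2 := Matrix.det_permute (Equiv.swap (Sum.inl 5) (Sum.inr 4))
      ((fromBlocks (blockX t) (-(t • blockG)) blockL (blockY t)).submatrix id
        (Equiv.sumComm (Fin 6) (Fin 6)))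
    rw [h1, hs, Equiv.Perm.sign_swap (by simp), Matrix.submatrix_submatrix, Function.id_comp,
      Function.comp_id, pivot_rows] at h2
    simpa using h2
  let : Invertible (pivQ t) :=
    ⟨pivQinv t, mul_eq_one_comm.mp (pivQ_mul_pivQinv ht), pivQ_mul_pivQinv ht⟩
  have hinv : ⅟(pivQ t) = pivQinv t := rfl
  rw [Matrix.det_fromBlocks₁₁, hinv, det_pivQ] at hperm
  rw [hfac, Matrix.det_mul, Matrix.det_fromBlocks_zero₂₁, det_blockB, ← smul_schur ht,
    Matrix.det_smul, Fintype.card_fin]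
  linear_combination t * hperm

lemma det_schurT (t : ℂ) :
    (schurT t).det =
      t * (2 * t ^ 12 - 3 * t ^ 11 + t ^ 10 + 2 * t ^ 9 - 3 * t ^ 8 + t ^ 7 + t ^ 6 + t ^ 5
        - 3 * t ^ 4 + 2 * t ^ 3 + t ^ 2 - 3 * t + 2) := by
  simp [schurT, Matrix.det_succ_row_zero, Fin.sum_univ_succ, Fin.succAbove]
  ring

/-- `det(x S₁ - x⁻¹ S₁ᵀ) = Δ_{K₁}(x)`. -/
theorem stmt7 (x : ℂ) (hx : x ≠ 0) :
    (x • SmatC 1 - x⁻¹ • (SmatC 1)ᵀ).det = P1 x := by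
  have ht : x ^ 2 ≠ 0 := pow_ne_zero 2 hx
  have hA : x ^ 2 • SmatC 1 - (SmatC 1)ᵀ = x • (x • SmatC 1 - x⁻¹ • (SmatC 1)ᵀ) := by
    rw [smul_sub, smul_smul, smul_smul, mul_inv_cancel₀ hx, one_smul, sq]
  have hdet : (x ^ 2 • SmatC 1 - (SmatC 1)ᵀ).det =
      x ^ 14 * (x • SmatC 1 - x⁻¹ • (SmatC 1)ᵀ).det := by
    rw [hA, Matrix.det_smul, Fintype.card_fin]
  rw [← Matrix.det_submatrix_equiv_self blockIdx, reindex_eq, det_schur_blockD ht, det_block_T37 ht,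
    det_schurT] at hdet
  apply mul_left_cancel₀ (pow_ne_zero 14 hx)
  rw [← hdet, P1]
  field_simp
end

section
/- Let z ∈ ℂ with ‖z‖ = 1, set ω = z², and assume ω ≠ 1. Let n : ℕ and assume P₀(z) ≠ 0. Then det ((1 − ω) • (Sₙ : Matrix (Fin 14) (Fin 14) ℂ) + (1 − conj ω) • Sₙᵀ) = 2 * ((ω.re : ℂ) − 1) * (1 − (n:ℂ) + (n:ℂ) * P₁(z) / P₀(z)) * det ((1 − ω) • (M : Matrix (Fin 12) (Fin 12) ℂ) + (1 − conj ω) • Mᵀ). -/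
/-!
Write `u = conj ω = ω⁻¹`. Since `1 - u = -u (1 - ω)`, the Tristram–Levine form of a real matrix `A`
is `(1 - ω) • (A - u • Aᵀ)`, so everything reduces to the determinants of `A - u • Aᵀ` for `A = M`
and `A = Sₙ`, which are polynomials in `u`.

Order the indices `0, 6, 1, 7, 2, 8, …, 5, 11`. In `2 × 2` blocks the matrix `M - u • Mᵀ` is then
banded, and its blocks just below the diagonal are all `!![1, -1; 0, 1]`. Moving the first block row
to the bottom therefore puts a `10 × 10` unitriangular block `T` in the upper left corner, and a Schur
complement (`det_eq_schur`) leaves a `2 × 2` determinant. For `Sₙ` the last two rows and columns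
are appended to the complement of the same block `T`, which leaves a `4 × 4` determinant.

The outcome is `det (M - u • Mᵀ) = p₀(u)` and
`det (Sₙ - u • Sₙᵀ) = u ((1 - n) p₀(u) + n p₁(u))`, where `pᵢ(z⁻²) = z⁻¹² Pᵢ(z)`, and the claim
follows from `(1 - ω)² u = 2 (Re ω - 1)`.
-/

open Matrix

/-- Schur complement of a block `T` of determinant one, after an even rearrangement of rows and
columns; the inverse of `T` enters only through a solution `X` of `T * X = B`. -/
lemma det_eq_schur {R : Type*} [CommRing R] {m k : ℕ}
    (A : Matrix (Fin (m + k)) (Fin (m + k)) R) (ρ γ : Equiv.Perm (Fin (m + k)))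
    (hs : Equiv.Perm.sign ρ * Equiv.Perm.sign γ = 1)
    (T : Matrix (Fin m) (Fin m) R) (B X : Matrix (Fin m) (Fin k) R)
    (C : Matrix (Fin k) (Fin m) R) (D : Matrix (Fin k) (Fin k) R)
    (hA : (A.submatrix ρ γ).submatrix finSumFinEquiv finSumFinEquiv = fromBlocks T B C D)
    (hT : T.det = 1) (hX : T * X = B) :
    A.det = (D - C * X).det := by
  have h1 : (A.submatrix ρ γ).det = A.det := by
    have h : A.submatrix ρ γ = (A.submatrix id γ).submatrix ρ id := rfl
    rw [h, det_permute, det_permute', ← mul_assoc, ← Int.cast_mul, ← Units.val_mul, hs]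
    simp
  have h2 : fromBlocks T B C D * fromBlocks 1 (-X) 0 1 = fromBlocks T 0 C (D - C * X) := by
    rw [fromBlocks_multiply]
    simp [hX, sub_eq_add_neg, add_comm]
  have h3 := congrArg det h2
  rw [det_mul, det_fromBlocks_zero₂₁, det_fromBlocks_zero₁₂, hT, ← hA,
    det_submatrix_equiv_self, h1] at h3
  simpa using h3

/-- The entry of `A - u • Aᵀ` at a position where `A` has the entry `a` and `Aᵀ` the entry `b`. -/
def e (u : ℂ) (a b : ℤ) : ℂ := a - u * b

/-- The unitriangular block common to `M - u • Mᵀ` and `Sₙ - u • Sₙᵀ`: rows `1, 7, 2, 8, …, 5, 11`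
and columns `0, 6, 1, 7, …, 4, 10`. -/
def Tblk (u : ℂ) : Matrix (Fin 10) (Fin 10) ℂ :=
  !![e u 1 0, e u (-1) 0, e u (-1) (-1), e u 1 0, e u 0 1, e u 0 0, e u 0 0, e u 0 0, e u 0 0, e u 0 0;
     e u 0 0, e u 1 0, e u 0 1, e u (-1) (-1), e u 0 (-1), e u 0 1, e u 0 0, e u 0 0, e u 0 0, e u 0 0;
     e u 0 0, e u 0 0, e u 1 0, e u (-1) 0, e u (-1) (-1), e u 1 0, e u 0 1, e u 0 0, e u 0 0, e u 0 0;
     e u 0 0, e u 0 0, e u 0 0, e u 1 0, e u 0 1, e u (-1) (-1), e u 0 (-1), e u 0 1, e u 0 0, e u 0 0;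
     e u 0 0, e u 0 0, e u 0 0, e u 0 0, e u 1 0, e u (-1) 0, e u (-1) (-1), e u 1 0, e u 0 1, e u 0 0;
     e u 0 0, e u 0 0, e u 0 0, e u 0 0, e u 0 0, e u 1 0, e u 0 1, e u (-1) (-1), e u 0 (-1), e u 0 1;
     e u 0 0, e u 0 0, e u 0 0, e u 0 0, e u 0 0, e u 0 0, e u 1 0, e u (-1) 0, e u (-1) (-1), e u 1 0;
     e u 0 0, e u 0 0, e u 0 0, e u 0 0, e u 0 0, e u 0 0, e u 0 0, e u 1 0, e u 0 1, e u (-1) (-1);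
     e u 0 0, e u 0 0, e u 0 0, e u 0 0, e u 0 0, e u 0 0, e u 0 0, e u 0 0, e u 1 0, e u (-1) 0;
     e u 0 0, e u 0 0, e u 0 0, e u 0 0, e u 0 0, e u 0 0, e u 0 0, e u 0 0, e u 0 0, e u 1 0]

lemma Tblk_eq (u : ℂ) : Tblk u =
  !![1, -1, -1 + u, 1, -u, 0, 0, 0, 0, 0;
     0, 1, -u, -1 + u, u, -u, 0, 0, 0, 0;
     0, 0, 1, -1, -1 + u, 1, -u, 0, 0, 0;
     0, 0, 0, 1, -u, -1 + u, u, -u, 0, 0;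
     0, 0, 0, 0, 1, -1, -1 + u, 1, -u, 0;
     0, 0, 0, 0, 0, 1, -u, -1 + u, u, -u;
     0, 0, 0, 0, 0, 0, 1, -1, -1 + u, 1;
     0, 0, 0, 0, 0, 0, 0, 1, -u, -1 + u;
     0, 0, 0, 0, 0, 0, 0, 0, 1, -1;
     0, 0, 0, 0, 0, 0, 0, 0, 0, 1] := by
  simp [Tblk, e, sub_eq_add_neg]

lemma det_Tblk (u : ℂ) : (Tblk u).det = 1 := by
  rw [Tblk_eq, det_of_isUpperTriangular]
  · simp [Fin.prod_univ_succ]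
  · intro i j h
    fin_cases i <;> fin_cases j <;> first | rfl | exact absurd h (by decide)

/-- Row order for `M`: the block row `0, 6` comes last. -/
def rowM : Equiv.Perm (Fin 12) where
  toFun := ![1, 7, 2, 8, 3, 9, 4, 10, 5, 11, 0, 6]
  invFun := ![10, 0, 2, 4, 6, 8, 11, 1, 3, 5, 7, 9]
  left_inv := by decide
  right_inv := by decide

/-- Column order for `M`, interleaving the two halves of the index set. -/
def colM : Equiv.Perm (Fin 12) where
  toFun := ![0, 6, 1, 7, 2, 8, 3, 9, 4, 10, 5, 11]
  invFun := ![0, 2, 4, 6, 8, 10, 1, 3, 5, 7, 9, 11]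
  left_inv := by decide
  right_inv := by decide

/-- Row order for `Sₙ`: that of `M`, followed by the last two indices. -/
def rowS : Equiv.Perm (Fin 14) where
  toFun := ![1, 7, 2, 8, 3, 9, 4, 10, 5, 11, 0, 6, 12, 13]
  invFun := ![10, 0, 2, 4, 6, 8, 11, 1, 3, 5, 7, 9, 12, 13]
  left_inv := by decide
  right_inv := by decide

/-- Column order for `Sₙ`: that of `M`, followed by the last two indices. -/
def colS : Equiv.Perm (Fin 14) where
  toFun := ![0, 6, 1, 7, 2, 8, 3, 9, 4, 10, 5, 11, 12, 13]
  invFun := ![0, 2, 4, 6, 8, 10, 1, 3, 5, 7, 9, 11, 12, 13]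
  left_inv := by decide
  right_inv := by decide

set_option maxHeartbeats 4000000 in
/-- The second literal below is the solution `X` of `T * X = B` by back substitution. -/
lemma det_M (u : ℂ) : (MmatC - u • MmatCᵀ).det =
    1 - u + u ^ 3 - u ^ 4 + u ^ 6 - u ^ 8 + u ^ 9 - u ^ 11 + u ^ 12 := by
  rw [det_eq_schur (m := 10) (k := 2) (MmatC - u • MmatCᵀ) rowM colM (by decide +kernel) (Tblk u)
    !![e u 0 0, e u 0 0;
       e u 0 0, e u 0 0;
       e u 0 0, e u 0 0;
       e u 0 0, e u 0 0;
       e u 0 0, e u 0 0;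
       e u 0 0, e u 0 0;
       e u 0 1, e u 0 0;
       e u 0 (-1), e u 0 1;
       e u (-1) (-1), e u 0 0;
       e u 0 0, e u (-1) (-1)]
    !![-1 + u - u^3 + u^4, -1 + u - u^3 + u^4 - u^5;
       u^2 - u^3 + u^5, -1 + u^2 - u^3;
       -1 + u - u^3 + u^4, -1 + u - u^3 + u^4;
       u^2 - u^3, -1 + u^2 - u^3 + u^4;
       -1 + u - u^3, -1 + u;
       u^2 - u^3, -1 + u^2 - u^3;
       -1 + u, -1 + u - u^2;
       u^2, -1;
       -1 + u, -1 + u;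
       0, -1 + u]
    !![e u (-1) (-1), e u 1 0, e u 0 1, e u 0 0, e u 0 0, e u 0 0, e u 0 0, e u 0 0, e u 0 0, e u 0 0;
       e u 0 1, e u (-1) (-1), e u 0 (-1), e u 0 1, e u 0 0, e u 0 0, e u 0 0, e u 0 0, e u 0 0, e u 0 0]
    !![e u 0 0, e u 0 0;
       e u 0 0, e u 0 0]
    ?_ (det_Tblk u) ?_]
  · simp [e, det_fin_two]
    ring
  · ext (i | i) (j | j) <;> fin_cases i <;> fin_cases j <;> rfl
  · rw [Tblk_eq]
    ext i j
    fin_cases i <;> fin_cases j <;> simp [e, Matrix.mul_apply, Fin.sum_univ_succ] <;> ring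

set_option maxHeartbeats 4000000 in
/-- The same block `T` is eliminated as for `M`, and `X` is the one used there, padded with two zero
columns. -/
lemma det_S (n : ℕ) (u : ℂ) : (SmatC n - u • (SmatC n)ᵀ).det =
    u * ((1 - n) * (1 - u + u ^ 3 - u ^ 4 + u ^ 6 - u ^ 8 + u ^ 9 - u ^ 11 + u ^ 12) +
      n * (2 - 3 * u + u ^ 2 + 2 * u ^ 3 - 3 * u ^ 4 + u ^ 5 + u ^ 6 + u ^ 7 - 3 * u ^ 8
        + 2 * u ^ 9 + u ^ 10 - 3 * u ^ 11 + 2 * u ^ 12)) := by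
  rw [det_eq_schur (m := 10) (k := 4) (SmatC n - u • (SmatC n)ᵀ) rowS colS (by decide +kernel)
    (Tblk u)
    !![e u 0 0, e u 0 0, e u 0 0, e u 0 0;
       e u 0 0, e u 0 0, e u 0 0, e u 0 0;
       e u 0 0, e u 0 0, e u 0 0, e u 0 0;
       e u 0 0, e u 0 0, e u 0 0, e u 0 0;
       e u 0 0, e u 0 0, e u 0 0, e u 0 0;
       e u 0 0, e u 0 0, e u 0 0, e u 0 0;
       e u 0 1, e u 0 0, e u 0 0, e u 0 0;
       e u 0 (-1), e u 0 1, e u 0 0, e u 0 0;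
       e u (-1) (-1), e u 0 0, e u 0 0, e u 0 0;
       e u 0 0, e u (-1) (-1), e u 0 0, e u 0 0]
    !![-1 + u - u^3 + u^4, -1 + u - u^3 + u^4 - u^5, 0, 0;
       u^2 - u^3 + u^5, -1 + u^2 - u^3, 0, 0;
       -1 + u - u^3 + u^4, -1 + u - u^3 + u^4, 0, 0;
       u^2 - u^3, -1 + u^2 - u^3 + u^4, 0, 0;
       -1 + u - u^3, -1 + u, 0, 0;
       u^2 - u^3, -1 + u^2 - u^3, 0, 0;
       -1 + u, -1 + u - u^2, 0, 0;
       u^2, -1, 0, 0;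
       -1 + u, -1 + u, 0, 0;
       0, -1 + u, 0, 0]
    !![e u (-1) (-1), e u 1 0, e u 0 1, e u 0 0, e u 0 0, e u 0 0, e u 0 0, e u 0 0, e u 0 0, e u 0 0;
       e u 0 1, e u (-1) (-1), e u 0 (-1), e u 0 1, e u 0 0, e u 0 0, e u 0 0, e u 0 0, e u 0 0, e u 0 0;
       e u 0 0, e u 0 0, e u 0 0, e u 0 0, e u 0 0, e u 0 0, e u 0 0, e u 0 0, e u 0 0, e u 0 0;
       e u 0 (-1), e u 0 0, e u 0 0, e u 0 0, e u 0 0, e u 0 0, e u 0 0, e u 0 0, e u 0 0, e u 0 0]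
    !![e u 0 0, e u 0 0, e u 0 0, e u (-1) 0;
       e u 0 0, e u 0 0, e u 0 0, e u 0 0;
       e u 0 0, e u 0 0, e u (-n) (-n), e u n (n+1);
       e u 0 0, e u 0 0, e u (n+1) n, e u (-(n+1)) (-(n+1))]
    ?_ (det_Tblk u) ?_]
  · simp [e, det_succ_row_zero, Fin.succAbove, Fin.sum_univ_succ]
    ring
  · ext (i | i) (j | j) <;> fin_cases i <;> fin_cases j <;> rfl
  · rw [Tblk_eq]
    ext i j
    fin_cases i <;> fin_cases j <;> simp [e, Matrix.mul_apply, Fin.sum_univ_succ] <;> ring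

/-- Equation (1) in the proof of Lemma 5.2: the ratio of the determinants of the
Tristram–Levine forms of `Kₙ` and `K₀` is `F(ω, n)`. -/
theorem stmt9 (z ω : ℂ) (hz : ‖z‖ = 1) (hω : ω = z ^ 2) (hω1 : ω ≠ 1)
    (n : ℕ) (hP : P0 z ≠ 0) :
    ((1 - ω) • SmatC n + (1 - (starRingEnd ℂ) ω) • (SmatC n)ᵀ).det =
      2 * ((ω.re : ℂ) - 1) * (1 - (n : ℂ) + (n : ℂ) * P1 z / P0 z) *
        ((1 - ω) • MmatC + (1 - (starRingEnd ℂ) ω) • MmatCᵀ).det := by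
  have hz0 : z ≠ 0 := by
    rintro rfl
    simp at hz
  have hc : (starRingEnd ℂ) ω = z⁻¹ ^ 2 := by
    rw [hω, map_pow, Complex.inv_eq_conj hz]
  have hre : (2 : ℂ) * ω.re = z ^ 2 + z⁻¹ ^ 2 := by
    have h := Complex.add_conj ω
    rw [hc] at h
    rw [← hω, h]
    push_cast
    ring
  have key : ∀ {m : ℕ} (A : Matrix (Fin m) (Fin m) ℂ),
      ((1 - ω) • A + (1 - (starRingEnd ℂ) ω) • Aᵀ).det
        = (1 - ω) ^ m * (A - (z⁻¹ ^ 2) • Aᵀ).det := by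
    intro m A
    have h : (1 - ω) • A + (1 - (starRingEnd ℂ) ω) • Aᵀ = (1 - ω) • (A - (z⁻¹ ^ 2) • Aᵀ) := by
      have h' : 1 - z⁻¹ ^ 2 = -((1 - z ^ 2) * z⁻¹ ^ 2) := by
        field_simp
        ring
      rw [hc, hω, h', smul_sub, smul_smul, neg_smul, ← sub_eq_add_neg]
    rw [h, det_smul, Fintype.card_fin]
  rw [key, key, det_S, det_M]
  have h0 : 1 - z⁻¹ ^ 2 + (z⁻¹ ^ 2) ^ 3 - (z⁻¹ ^ 2) ^ 4 + (z⁻¹ ^ 2) ^ 6 - (z⁻¹ ^ 2) ^ 8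
      + (z⁻¹ ^ 2) ^ 9 - (z⁻¹ ^ 2) ^ 11 + (z⁻¹ ^ 2) ^ 12 = z⁻¹ ^ 12 * P0 z := by
    unfold P0
    field_simp
  have h1 : 2 - 3 * z⁻¹ ^ 2 + (z⁻¹ ^ 2) ^ 2 + 2 * (z⁻¹ ^ 2) ^ 3 - 3 * (z⁻¹ ^ 2) ^ 4
      + (z⁻¹ ^ 2) ^ 5 + (z⁻¹ ^ 2) ^ 6 + (z⁻¹ ^ 2) ^ 7 - 3 * (z⁻¹ ^ 2) ^ 8 + 2 * (z⁻¹ ^ 2) ^ 9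
      + (z⁻¹ ^ 2) ^ 10 - 3 * (z⁻¹ ^ 2) ^ 11 + 2 * (z⁻¹ ^ 2) ^ 12 = z⁻¹ ^ 12 * P1 z := by
    unfold P1
    field_simp
  have h2 : 2 * ((ω.re : ℂ) - 1) = (1 - ω) ^ 2 * z⁻¹ ^ 2 := by
    rw [mul_sub, hre, hω]
    field_simp
    ring
  rw [h0, h1, h2]
  field_simp
end

section
/- Let z ∈ ℂ with ‖z‖ = 1, set ω = z², assume ω ≠ 1, let n : ℕ, and assume P₀(z) ≠ 0. Set Hₙ(ω) = (1 − ω) • (Sₙ : Matrix (Fin 14) (Fin 14) ℂ) + (1 − conj ω) • Sₙᵀ and H_M(ω) = (1 − ω) • (M : Matrix (Fin 12) (Fin 12) ℂ) + (1 − conj ω) • Mᵀ; both matrices are Hermitian and H_M(ω) is nonsingular. Set F = 2 * ((ω.re : ℂ) − 1) * (1 − (n:ℂ) + (n:ℂ) * P₁(z) / P₀(z)). Then F is a real number, and: if F.re < 0 then sig(Hₙ(ω)) = sig(H_M(ω)); if F.re > 0 then sig(Hₙ(ω)) = sig(H_M(ω)) + 2 or sig(Hₙ(ω)) = sig(H_M(ω))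 − 2. -/
/-!
Write `w = ω`, `c = (1 - w)(1 - w̄) = 2 - 2 Re w`, and split the coordinates as `12 + 2`. Then
`Hₙ = [[H_M, B], [Bᴴ, D]]`, where the only nonzero entry of `B` is `-(1 - w)`, in the first row
and second column. If `H_M` is nonsingular, `Hₙ` is congruent to `H_M ⊕ T` with
`T = D - Bᴴ H_M⁻¹ B` a Hermitian `2 × 2` matrix that depends on `H_M⁻¹` only through
`g = (H_M⁻¹)₀₀`, and a direct expansion gives `det T = c (n c g - 1)` (`schur_det`).

Since `|w| = 1`, `H_M` is a nonzero scalar multiple of `w M - Mᵀ`, whose determinant is the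
Alexander polynomial `Δ(w) = w⁶ P₀(z)`. Only two consequences are needed: `w M - Mᵀ` is injective
when `Δ(w) ≠ 0` (`alexM_det_ne_zero`), and the first column of its adjugate is the explicit
polynomial vector `adjCol` (`alexM_mulVec_adjCol`). The latter yields `c g P₀ = P₀ - P₁`, hence
`det T = F`. So `F` is real; if `F < 0` the two eigenvalues of `T` have opposite signs and
`sig T = 0`, and if `F > 0` they have the same sign and `sig T = ±2`.

Additivity of the signature over the congruence (`matSig_schur`) is a form of Sylvester's law of
inertia. A subspace on which a Hermitian form is positive (negative) definite has dimension at most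
the number of positive (negative) eigenvalues, in the form of `card_pos_le_of_congr`. For
nonsingular `H_M` and `T` these two inequalities, whose left sides sum to `14`, must be equalities.
-/

open Matrix

/-- The Tristram–Levine form of `Kₙ` at `ω`. -/
noncomputable def Hn (n : ℕ) (ω : ℂ) : Matrix (Fin 14) (Fin 14) ℂ :=
  (1 - ω) • SmatC n + (1 - (starRingEnd ℂ) ω) • (SmatC n)ᵀ

/-- The Tristram–Levine form of `K₀` at `ω`. -/
noncomputable def HM (ω : ℂ) : Matrix (Fin 12) (Fin 12) ℂ :=
  (1 - ω) • MmatC + (1 - (starRingEnd ℂ) ω) • MmatCᵀ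

/-- The signature of a Hermitian complex matrix: the number of positive eigenvalues
minus the number of negative eigenvalues (and `0` for non-Hermitian matrices). -/
noncomputable def matSig {n : ℕ} (H : Matrix (Fin n) (Fin n) ℂ) : ℤ := by
  classical
  exact if h : H.IsHermitian then
    ((Finset.univ.filter fun i => 0 < h.eigenvalues i).card : ℤ) -
    ((Finset.univ.filter fun i => h.eigenvalues i < 0).card : ℤ)
  else 0

/-! ### Inertia under congruence -/

/-- If `Nᴴ diag(L) N = diag(D)`, with `N` possibly rectangular, then `L` has at least as many
positive entries as `D`. -/
theorem card_pos_le_of_congr {m ι : Type*} [Fintype m] [DecidableEq m] [Fintype ι]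
    [DecidableEq ι] (L : m → ℝ) (D : ι → ℝ) (N : Matrix m ι ℂ)
    (h : Nᴴ * diagonal (fun i => (L i : ℂ)) * N = diagonal (fun i => (D i : ℂ))) :
    (Finset.univ.filter fun i => 0 < D i).card ≤ (Finset.univ.filter fun i => 0 < L i).card := by
  classical
  have key : ∀ y : ι → ℂ, ∑ i, L i * ‖(N *ᵥ y) i‖ ^ 2 = ∑ i, D i * ‖y i‖ ^ 2 := by
    intro y
    have h1 : star (N *ᵥ y) ⬝ᵥ (diagonal (fun i => (L i : ℂ)) *ᵥ (N *ᵥ y))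
        = star y ⬝ᵥ (diagonal (fun i => (D i : ℂ)) *ᵥ y) := by
      rw [← h, star_mulVec, ← dotProduct_mulVec, mulVec_mulVec, mulVec_mulVec, Matrix.mul_assoc]
    have aux : ∀ (c : ℝ) (x : ℂ), star x * ((c : ℂ) * x) = ((c * ‖x‖ ^ 2 : ℝ) : ℂ) := by
      intro c x
      have := Complex.conj_mul' x
      push_cast
      rw [← this, Complex.star_def]; ring
    simp only [dotProduct, mulVec_diagonal, Pi.star_apply, aux] at h1
    exact_mod_cast h1
  -- `f` sends a vector supported on `{D > 0}` to the `{L > 0}` coordinates of its image under `N`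
  let ext : ({i // 0 < D i} → ℂ) →ₗ[ℂ] (ι → ℂ) :=
    { toFun := fun y i => if hi : 0 < D i then y ⟨i, hi⟩ else 0
      map_add' := by intro x y; ext i; by_cases hi : 0 < D i <;> simp [hi]
      map_smul' := by intro c y; ext i; by_cases hi : 0 < D i <;> simp [hi] }
  let f : ({i // 0 < D i} → ℂ) →ₗ[ℂ] ({i // 0 < L i} → ℂ) :=
    (LinearMap.funLeft ℂ ℂ (Subtype.val : {i // 0 < L i} → m)) ∘ₗ N.mulVecLin ∘ₗ ext
  have hf : Function.Injective f := by
    rw [injective_iff_map_eq_zero]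
    intro y hy
    have hk := key (ext y)
    have hle : ∑ i, L i * ‖(N *ᵥ ext y) i‖ ^ 2 ≤ 0 := by
      refine Finset.sum_nonpos fun i _ => ?_
      by_cases hi : 0 < L i
      · have : (N *ᵥ ext y) i = 0 := congrFun hy ⟨i, hi⟩
        simp [this]
      · exact mul_nonpos_of_nonpos_of_nonneg (not_lt.mp hi) (by positivity)
    have hnn : ∀ i ∈ Finset.univ, 0 ≤ D i * ‖ext y i‖ ^ 2 := by
      intro i _
      by_cases hi : 0 < D i
      · positivity
      · simp [ext, hi]
    have hz := (Finset.sum_eq_zero_iff_of_nonneg hnn).mp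
      (le_antisymm (hk ▸ hle) (Finset.sum_nonneg hnn))
    ext ⟨i, hi⟩
    have := hz i (Finset.mem_univ i)
    simpa [ext, hi, hi.ne'] using this
  have := LinearMap.finrank_le_finrank_of_injective hf
  simpa [Module.finrank_fintype_fun_eq_card, Fintype.card_subtype] using this

theorem conj_eigenvectorUnitary {k : Type*} [Fintype k] [DecidableEq k] {X : Matrix k k ℂ}
    (hX : X.IsHermitian) :
    (hX.eigenvectorUnitary : Matrix k k ℂ)ᴴ * X * (hX.eigenvectorUnitary : Matrix k k ℂ)
      = diagonal (fun i => (hX.eigenvalues i : ℂ)) := by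
  simpa [Unitary.conjStarAlgAut_apply, star_eq_conjTranspose, Function.comp_def] using
    hX.conjStarAlgAut_star_eigenvectorUnitary

/-- Diagonalizing `H`, `A` and the Schur complement of `A` in `H`, the block decomposition of `H`
becomes a congruence between the diagonal matrices of eigenvalues. -/
theorem exists_diag_congr {m a b : Type*} [Fintype m] [DecidableEq m] [Fintype a] [DecidableEq a]
    [Fintype b] [DecidableEq b] (e : a ⊕ b ≃ m) {H : Matrix m m ℂ} {A : Matrix a a ℂ}
    {B : Matrix a b ℂ} {D : Matrix b b ℂ} (hH : H.IsHermitian) (hA : A.IsHermitian)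
    (hdet : A.det ≠ 0) (hb : H.submatrix e e = fromBlocks A B Bᴴ D)
    (hT : (D - Bᴴ * A⁻¹ * B).IsHermitian) :
    ∃ N : Matrix m (a ⊕ b) ℂ, Nᴴ * diagonal (fun i => (hH.eigenvalues i : ℂ)) * N =
      diagonal (fun i => ((Sum.elim hA.eigenvalues hT.eigenvalues i : ℝ) : ℂ)) := by
  have hu : IsUnit A.det := isUnit_iff_ne_zero.mpr hdet
  set U : Matrix m m ℂ := (hH.eigenvectorUnitary : Matrix m m ℂ) with hU
  set V : Matrix a a ℂ := (hA.eigenvectorUnitary : Matrix a a ℂ) with hV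
  set W : Matrix b b ℂ := (hT.eigenvectorUnitary : Matrix b b ℂ) with hW
  have sH : U * diagonal (fun i => (hH.eigenvalues i : ℂ)) * Uᴴ = H := by
    have := hH.spectral_theorem
    simpa [Unitary.conjStarAlgAut_apply, star_eq_conjTranspose, Function.comp_def] using this.symm
  have sA := conj_eigenvectorUnitary hA
  have sT := conj_eigenvectorUnitary hT
  rw [← hV] at sA
  rw [← hW] at sT
  have hAi : (A⁻¹)ᴴ = A⁻¹ := hA.inv
  -- The columns of `R` are orthogonal for the block form: those of `(V, 0)` diagonalize `A`, and
  -- those of `(-A⁻¹ B W, W)` span the orthogonal complement of the first summand, on which the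
  -- form restricts to the Schur complement.
  set R : Matrix (a ⊕ b) (a ⊕ b) ℂ := fromBlocks V (-(A⁻¹ * B * W)) 0 W with hR
  have hRR : Rᴴ * fromBlocks A B Bᴴ D * R =
      diagonal (Sum.elim (fun i => (hA.eigenvalues i : ℂ)) fun i => (hT.eigenvalues i : ℂ)) := by
    rw [← fromBlocks_diagonal, ← sA, ← sT, hR, fromBlocks_conjTranspose, fromBlocks_multiply,
      fromBlocks_multiply]
    simp only [conjTranspose_neg, conjTranspose_mul, hAi, conjTranspose_zero]
    have e1 : A * (A⁻¹ * B * W) = B * W := by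
      rw [Matrix.mul_assoc, mul_nonsing_inv_cancel_left _ _ hu]
    have e2 : Wᴴ * (Bᴴ * A⁻¹) * A = Wᴴ * Bᴴ := by
      rw [← Matrix.mul_assoc, nonsing_inv_mul_cancel_right _ _ hu]
    congr 1
    · simp
    · simp only [Matrix.mul_neg, Matrix.mul_assoc, Matrix.zero_mul, add_zero] at e1 ⊢
      rw [e1]; simp
    · simp [e2]
    · simp only [Matrix.neg_mul, e2]
      simp [Matrix.mul_assoc, Matrix.mul_sub, Matrix.sub_mul, Matrix.add_mul]
      abel
  refine ⟨Uᴴ * R.submatrix e.symm id, ?_⟩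
  have hH' : H = (fromBlocks A B Bᴴ D).submatrix e.symm e.symm := by
    rw [← hb]; simp
  calc _ = (R.submatrix e.symm id)ᴴ * (U * diagonal (fun i => (hH.eigenvalues i : ℂ)) * Uᴴ)
        * R.submatrix e.symm id := by
        simp only [conjTranspose_mul, conjTranspose_conjTranspose, Matrix.mul_assoc]
    _ = Rᴴ * fromBlocks A B Bᴴ D * R := by
        rw [sH, hH', conjTranspose_submatrix, submatrix_mul_equiv, submatrix_mul_equiv]
        simp
    _ = _ := by
        rw [hRR]
        congr 1
        ext i
        cases i <;> simp

theorem diagonal_const_mul {k : Type*} [DecidableEq k] (s : ℝ) (f : k → ℝ) :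
    diagonal (fun i => ((s * f i : ℝ) : ℂ)) = (s : ℂ) • diagonal (fun i => (f i : ℂ)) := by
  ext i j
  by_cases hij : i = j
  · subst hij; simp
  · simp [hij]

/-- The number of entries of the family `l` that have the same sign as `s`: the positive ones for
`s = 1`, the negative ones for `s = -1`. -/
noncomputable def signCount {k : Type*} [Fintype k] (s : ℝ) (l : k → ℝ) : ℕ :=
  (Finset.univ.filter fun i => 0 < s * l i).card

theorem signCount_add_le {m a b : Type*} [Fintype m] [DecidableEq m] [Fintype a] [Fintype b]
    [DecidableEq a] [DecidableEq b] (s : ℝ) {L : m → ℝ} {x : a → ℝ} {y : b → ℝ}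
    {N : Matrix m (a ⊕ b) ℂ}
    (h : Nᴴ * diagonal (fun i => (L i : ℂ)) * N =
      diagonal (fun i => ((Sum.elim x y i : ℝ) : ℂ))) :
    signCount s x + signCount s y ≤ signCount s L := by
  have h' : Nᴴ * diagonal (fun i => ((s * L i : ℝ) : ℂ)) * N =
      diagonal (fun i => ((s * Sum.elim x y i : ℝ) : ℂ)) := by
    rw [diagonal_const_mul, diagonal_const_mul, Matrix.mul_smul, Matrix.smul_mul, h]
  have := card_pos_le_of_congr _ _ _ h'
  refine le_trans (le_of_eq ?_) this
  unfold signCount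
  rw [← Fintype.card_subtype, ← Fintype.card_subtype, ← Fintype.card_subtype, ← Fintype.card_sum]
  exact (Fintype.card_congr (Equiv.subtypeSum (p := fun i => 0 < s * Sum.elim x y i))).symm

theorem matSig_eq {k : ℕ} {X : Matrix (Fin k) (Fin k) ℂ} (hX : X.IsHermitian) :
    matSig X = (signCount 1 hX.eigenvalues : ℤ) - signCount (-1) hX.eigenvalues := by
  simp [matSig, signCount, hX]

theorem signCount_add_signCount_le {k : ℕ} (l : Fin k → ℝ) :
    signCount 1 l + signCount (-1) l ≤ k := by
  have hd : Disjoint (Finset.univ.filter fun i => 0 < (1 : ℝ) * l i)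
      (Finset.univ.filter fun i => 0 < (-1 : ℝ) * l i) := by
    rw [Finset.disjoint_filter]
    intro i _ h1 h2
    linarith
  unfold signCount
  rw [← Finset.card_union_of_disjoint hd]
  simpa using Finset.card_le_univ (_ : Finset (Fin k))

theorem signCount_add_signCount {k : ℕ} {X : Matrix (Fin k) (Fin k) ℂ} (hX : X.IsHermitian)
    (hdet : X.det ≠ 0) :
    signCount 1 hX.eigenvalues + signCount (-1) hX.eigenvalues = k := by
  refine le_antisymm (signCount_add_signCount_le _) ?_
  rw [hX.det_eq_prod_eigenvalues, Finset.prod_ne_zero_iff] at hdet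
  unfold signCount
  calc k = (Finset.univ : Finset (Fin k)).card := by simp
    _ ≤ _ := Finset.card_le_card (fun i _ => ?_)
    _ ≤ _ := Finset.card_union_le _ _
  have : hX.eigenvalues i ≠ 0 := by simpa using hdet i (Finset.mem_univ i)
  rcases this.lt_or_gt with h | h
  · simp [h]
  · simp [h]

/-- Signatures add over the Schur complement of a nonsingular Hermitian block, provided
the Schur complement is nonsingular as well. -/
theorem matSig_schur {m a b : ℕ} (e : Fin a ⊕ Fin b ≃ Fin m) {H : Matrix (Fin m) (Fin m) ℂ}
    {A : Matrix (Fin a) (Fin a) ℂ} {B : Matrix (Fin a) (Fin b) ℂ} {D : Matrix (Fin b) (Fin b) ℂ}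
    (hH : H.IsHermitian) (hA : A.IsHermitian) (hdet : A.det ≠ 0)
    (hb : H.submatrix e e = fromBlocks A B Bᴴ D) (hT : (D - Bᴴ * A⁻¹ * B).IsHermitian)
    (hdT : (D - Bᴴ * A⁻¹ * B).det ≠ 0) :
    matSig H = matSig A + matSig (D - Bᴴ * A⁻¹ * B) := by
  obtain ⟨N, hN⟩ := exists_diag_congr e hH hA hdet hb hT
  have h1 := signCount_add_le 1 hN
  have h2 := signCount_add_le (-1) hN
  have h3 := signCount_add_signCount_le hH.eigenvalues
  have h4 := signCount_add_signCount hA hdet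
  have h5 := signCount_add_signCount hT hdT
  have h6 : a + b = m := by simpa using Fintype.card_congr e
  rw [matSig_eq hH, matSig_eq hA, matSig_eq hT]
  omega

/-! ### Hermitian 2 × 2 matrices -/

theorem matSig_two_of_det_neg {T : Matrix (Fin 2) (Fin 2) ℂ} (hT : T.IsHermitian) {r : ℝ}
    (hr : T.det = r) (h : r < 0) : matSig T = 0 := by
  have hd : r = hT.eigenvalues 0 * hT.eigenvalues 1 := by
    have := hT.det_eq_prod_eigenvalues
    rw [hr, Fin.prod_univ_two] at this
    exact Complex.ofReal_injective (by rw [Complex.ofReal_mul]; exact this)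
  rw [matSig_eq hT]
  simp only [signCount, Finset.card_filter, Fin.sum_univ_two]
  rcases mul_neg_iff.mp (hd ▸ h) with ⟨h1, h2⟩ | ⟨h1, h2⟩
  · simp [h1, h2, h1.not_gt, h2.not_gt]
  · simp [h1, h2, h1.not_gt, h2.not_gt]

theorem matSig_two_of_det_pos {T : Matrix (Fin 2) (Fin 2) ℂ} (hT : T.IsHermitian) {r : ℝ}
    (hr : T.det = r) (h : 0 < r) : matSig T = 2 ∨ matSig T = -2 := by
  have hd : r = hT.eigenvalues 0 * hT.eigenvalues 1 := by
    have := hT.det_eq_prod_eigenvalues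
    rw [hr, Fin.prod_univ_two] at this
    exact Complex.ofReal_injective (by rw [Complex.ofReal_mul]; exact this)
  rw [matSig_eq hT]
  simp only [signCount, Finset.card_filter, Fin.sum_univ_two]
  rcases mul_pos_iff.mp (hd ▸ h) with ⟨h1, h2⟩ | ⟨h1, h2⟩
  · left; simp [h1, h2, h1.not_gt, h2.not_gt]
  · right; simp [h1, h2, h1.not_gt, h2.not_gt]

/-! ### The Alexander matrix of `K₀` -/

/-- The Alexander polynomial `Δ` of `K₀`, normalized as a polynomial in `w` with constant term `1`;
it is related to `P₀` by `Δ(z²) = z¹² P₀(z)`. -/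
def Del (w : ℂ) : ℂ := 1 - w + w ^ 3 - w ^ 4 + w ^ 6 - w ^ 8 + w ^ 9 - w ^ 11 + w ^ 12

/-- The presentation matrix `w M - Mᵀ` of the Alexander module of `K₀`. -/
noncomputable def alexM (w : ℂ) : Matrix (Fin 12) (Fin 12) ℂ := w • MmatC - MmatCᵀ

/-- The first column of the adjugate of `w M - Mᵀ`, characterized for the present purpose by
`alexM_mulVec_adjCol`. -/
def adjCol (w : ℂ) : Fin 12 → ℂ :=
  ![1 - w + w ^ 3 - w ^ 4 + w ^ 7 - w ^ 8 + w ^ 10 - w ^ 11,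
    w ^ 7 - w ^ 8 + w ^ 10 - w ^ 11,
    -w ^ 2 + w ^ 3 - w ^ 5 + w ^ 6 - w ^ 8 + w ^ 10 - w ^ 11,
    w ^ 3 - w ^ 4 + w ^ 6 - w ^ 7 + w ^ 10 - w ^ 11,
    w ^ 10 - w ^ 11,
    -w ^ 5 + w ^ 6 - w ^ 8 + w ^ 9 - w ^ 11,
    1 - w + w ^ 3 - w ^ 4 + w ^ 5,
    -w + w ^ 2 - w ^ 4 + 2 * w ^ 5 - w ^ 6,
    w ^ 5 - w ^ 6,
    w ^ 3 - w ^ 4 + w ^ 5 - w ^ 7 + w ^ 8,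
    -w ^ 4 + 2 * w ^ 5 - w ^ 6 - w ^ 7 + 2 * w ^ 8 - w ^ 9,
    w ^ 5 - w ^ 6 + w ^ 8 - w ^ 9]

theorem MmatC_eq : MmatC =
  !![-1, 0, 0, 0, 0, 0, 1, 0, 0, 0, 0, 0;
      1,-1, 0, 0, 0, 0,-1, 1, 0, 0, 0, 0;
      0, 1,-1, 0, 0, 0, 0,-1, 1, 0, 0, 0;
      0, 0, 1,-1, 0, 0, 0, 0,-1, 1, 0, 0;
      0, 0, 0, 1,-1, 0, 0, 0, 0,-1, 1, 0;
      0, 0, 0, 0, 1,-1, 0, 0, 0, 0,-1, 0;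
      0, 0, 0, 0, 0, 0,-1, 0, 0, 0, 0, 0;
      0, 0, 0, 0, 0, 0, 1,-1, 0, 0, 0, 0;
      0, 0, 0, 0, 0, 0, 0, 1,-1, 0, 0, 0;
      0, 0, 0, 0, 0, 0, 0, 0, 1,-1, 0, 0;
      0, 0, 0, 0, 0, 0, 0, 0, 0, 1,-1, 0;
      0, 0, 0, 0, 0, 0, 0, 0, 0, 0, 1,-1] := by
  ext i j
  fin_cases i <;> fin_cases j <;> simp [MmatC, Mmat, Smat, Fin.castLE]

/-- The twelve coordinates of `(w M - Mᵀ) v`. -/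
theorem alexM_mulVec (w : ℂ) (v : Fin 12 → ℂ) : alexM w *ᵥ v =
    ![w * (-v 0 + v 6) + v 0 - v 1,
      w * (v 0 - v 1 - v 6 + v 7) + v 1 - v 2,
      w * (v 1 - v 2 - v 7 + v 8) + v 2 - v 3,
      w * (v 2 - v 3 - v 8 + v 9) + v 3 - v 4,
      w * (v 3 - v 4 - v 9 + v 10) + v 4 - v 5,
      w * (v 4 - v 5 - v 10) + v 5,
      w * (-v 6) - v 0 + v 1 + v 6 - v 7,
      w * (v 6 - v 7) - v 1 + v 2 + v 7 - v 8,
      w * (v 7 - v 8) - v 2 + v 3 + v 8 - v 9,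
      w * (v 8 - v 9) - v 3 + v 4 + v 9 - v 10,
      w * (v 9 - v 10) - v 4 + v 5 + v 10 - v 11,
      w * (v 10 - v 11) + v 11] := by
  rw [alexM, MmatC_eq, sub_mulVec, smul_mulVec]
  ext i
  fin_cases i <;>
    simp [mulVec, dotProduct, Fin.sum_univ_succ, transpose_apply, -mul_eq_mul_left_iff] <;> ring

theorem alexM_mulVec_adjCol (w : ℂ) : alexM w *ᵥ adjCol w = Del w • Pi.single 0 1 := by
  rw [alexM_mulVec]
  ext i
  fin_cases i <;> simp [adjCol, Del] <;> ring

theorem alexM_det_ne_zero {w : ℂ} (h : Del w ≠ 0) : (alexM w).det ≠ 0 := by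
  intro hd
  obtain ⟨v, hv, hv0⟩ := exists_mulVec_eq_zero_iff.mpr hd
  apply hv
  rw [alexM_mulVec] at hv0
  have r0 : w * (-v 0 + v 6) + v 0 - v 1 = 0 := congrFun hv0 0
  have r1 : w * (v 0 - v 1 - v 6 + v 7) + v 1 - v 2 = 0 := congrFun hv0 1
  have r2 : w * (v 1 - v 2 - v 7 + v 8) + v 2 - v 3 = 0 := congrFun hv0 2
  have r3 : w * (v 2 - v 3 - v 8 + v 9) + v 3 - v 4 = 0 := congrFun hv0 3
  have r4 : w * (v 3 - v 4 - v 9 + v 10) + v 4 - v 5 = 0 := congrFun hv0 4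
  have r5 : w * (v 4 - v 5 - v 10) + v 5 = 0 := congrFun hv0 5
  have r6 : w * (-v 6) - v 0 + v 1 + v 6 - v 7 = 0 := congrFun hv0 6
  have r7 : w * (v 6 - v 7) - v 1 + v 2 + v 7 - v 8 = 0 := congrFun hv0 7
  have r8 : w * (v 7 - v 8) - v 2 + v 3 + v 8 - v 9 = 0 := congrFun hv0 8
  have r9 : w * (v 8 - v 9) - v 3 + v 4 + v 9 - v 10 = 0 := congrFun hv0 9
  have r10 : w * (v 9 - v 10) - v 4 + v 5 + v 10 - v 11 = 0 := congrFun hv0 10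
  have r11 : w * (v 10 - v 11) + v 11 = 0 := congrFun hv0 11
  -- `Δ v₀` and `Δ v₆` result from applying rows 0 and 6 of the adjugate to `(w M - Mᵀ) v = 0`
  have v0 : v 0 = 0 := by
    refine (mul_eq_zero.mp (?_ : Del w * v 0 = 0)).resolve_left h
    unfold Del
    linear_combination (1 - w + w ^ 3 - w ^ 4 + w ^ 7 - w ^ 8 + w ^ 10 - w ^ 11) * r0
      + (1 - w + w ^ 3 - w ^ 4) * r1
      + (1 - w + w ^ 3 - w ^ 5 + w ^ 6 - w ^ 8 + w ^ 9) * r2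
      + (1 - w + w ^ 4 - w ^ 5 + w ^ 7 - w ^ 8) * r3
      + (1 - w) * r4
      + (1 - w ^ 2 + w ^ 3 - w ^ 5 + w ^ 6) * r5
      + (-w ^ 6 + w ^ 7 - w ^ 8 + w ^ 10 - w ^ 11) * r6
      + (w ^ 5 - 2 * w ^ 6 + w ^ 7 - w ^ 9 + w ^ 10) * r7
      + (w ^ 5 - w ^ 6) * r8
      + (-w ^ 3 + w ^ 4 - w ^ 6 + w ^ 7 - w ^ 8) * r9
      + (w ^ 2 - 2 * w ^ 3 + w ^ 4 + w ^ 5 - 2 * w ^ 6 + w ^ 7) * r10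
      + (w ^ 2 - w ^ 3 + w ^ 5 - w ^ 6) * r11
  have v6 : v 6 = 0 := by
    refine (mul_eq_zero.mp (?_ : Del w * v 6 = 0)).resolve_left h
    unfold Del
    linear_combination (1 - w + w ^ 3 - w ^ 4 + w ^ 5) * r0
      + (1 - w + w ^ 3 - w ^ 4 + w ^ 6 - w ^ 7 + w ^ 9 - w ^ 10) * r1
      + (1 - w + w ^ 4 - w ^ 5 + w ^ 6 - w ^ 8 + w ^ 9) * r2
      + (1 - w + w ^ 2 - w ^ 3 + w ^ 4) * r3
      + (1 - w + w ^ 6 - w ^ 7) * r4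
      + (w - w ^ 2 + w ^ 4 - w ^ 5 + w ^ 6) * r5
      + (1 - w + w ^ 3 - w ^ 4 + w ^ 5 - w ^ 6 + w ^ 7 - w ^ 8 + w ^ 10 - w ^ 11) * r6
      + (1 - w + w ^ 3 - 2 * w ^ 4 + 2 * w ^ 5 - w ^ 6) * r7
      + (1 - w + w ^ 3 - w ^ 4 + w ^ 5 - w ^ 8 + w ^ 9) * r8
      + (1 - w + w ^ 2 - w ^ 3 + w ^ 5 - w ^ 6 + w ^ 7 - w ^ 8) * r9
      + (1 - 2 * w + 2 * w ^ 2 - w ^ 3 - w ^ 4 + 2 * w ^ 5 - w ^ 6) * r10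
      + (1 - w + w ^ 2 - w ^ 4 + w ^ 5) * r11
  -- the equations give `v (i + 1)` and `v (i + 7)` in terms of the earlier coordinates
  have s1 : v 1 = 0 := by linear_combination -r0 + (1 - w) * v0 + w * v6
  have s7 : v 7 = 0 := by linear_combination -r6 + (1 - w) * v6 - v0 + s1
  have s2 : v 2 = 0 := by linear_combination -r1 + w * (v0 - s1 - v6 + s7) + s1
  have s8 : v 8 = 0 := by linear_combination -r7 + w * (v6 - s7) - s1 + s2 + s7
  have s3 : v 3 = 0 := by linear_combination -r2 + w * (s1 - s2 - s7 + s8) + s2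
  have s9 : v 9 = 0 := by linear_combination -r8 + w * (s7 - s8) - s2 + s3 + s8
  have s4 : v 4 = 0 := by linear_combination -r3 + w * (s2 - s3 - s8 + s9) + s3
  have s10 : v 10 = 0 := by linear_combination -r9 + w * (s8 - s9) - s3 + s4 + s9
  have s5 : v 5 = 0 := by linear_combination -r4 + w * (s3 - s4 - s9 + s10) + s4
  have s11 : v 11 = 0 := by linear_combination -r10 + w * (s9 - s10) - s4 + s5 + s10
  ext i
  fin_cases i <;> assumption

/-- On the unit circle, with `w'` the conjugate and inverse of `w`, one has
`1 - w' = -(1 - w) w'`, so the form `H_M` is a multiple of the Alexander matrix. -/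
theorem HM_eq {w w' : ℂ} (hw : w' = (starRingEnd ℂ) w) (h1 : w * w' = 1) :
    HM w = ((1 - w) * w') • alexM w := by
  have e : w' * w = 1 := by rw [mul_comm, h1]
  have e1 : (1 - w) * w' * w = 1 - w := by rw [mul_assoc, e, mul_one]
  have e2 : 1 - w' = -((1 - w) * w') := by linear_combination -h1
  rw [HM, alexM, ← hw, smul_sub, smul_smul, e1, e2, neg_smul,
    sub_eq_add_neg (_ • MmatC)]

theorem HM_det_ne_zero {w w' : ℂ} (hw : w' = (starRingEnd ℂ) w) (h1 : w * w' = 1) (hne : w ≠ 1)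
    (hD : Del w ≠ 0) : (HM w).det ≠ 0 := by
  rw [HM_eq hw h1, det_smul]
  have : w' ≠ 0 := right_ne_zero_of_mul_eq_one h1
  exact mul_ne_zero (pow_ne_zero _ (mul_ne_zero (sub_ne_zero.mpr hne.symm) this))
    (alexM_det_ne_zero hD)

theorem HM_inv_zero_zero {w w' : ℂ} (hw : w' = (starRingEnd ℂ) w) (h1 : w * w' = 1) (hne : w ≠ 1)
    (hD : Del w ≠ 0) : (1 - w) * w' * Del w * (HM w)⁻¹ 0 0 = adjCol w 0 := by
  have hu : IsUnit (HM w).det := isUnit_iff_ne_zero.mpr (HM_det_ne_zero hw h1 hne hD)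
  have h2 : HM w *ᵥ adjCol w = ((1 - w) * w' * Del w) • Pi.single 0 1 := by
    rw [HM_eq hw h1, smul_mulVec, alexM_mulVec_adjCol, smul_smul]
  have h3 : adjCol w = ((1 - w) * w' * Del w) • (HM w)⁻¹ *ᵥ Pi.single 0 1 := by
    rw [← mulVec_smul, ← h2, mulVec_mulVec, nonsing_inv_mul _ hu, one_mulVec]
  have := congrFun h3 0
  simpa using this.symm

/-! ### The block decomposition of `Hₙ` and its Schur complement -/

theorem isHermitian_form {k : ℕ} (S : Matrix (Fin k) (Fin k) ℤ) (w : ℂ) :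
    ((1 - w) • S.map (fun a => (a : ℂ))
      + (1 - (starRingEnd ℂ) w) • (S.map (fun a => (a : ℂ)))ᵀ).IsHermitian := by
  ext i j
  simp
  ring

/-- The off-diagonal block of `Hₙ`: its only nonzero entry is `-(1 - w)`. -/
noncomputable def offB (w : ℂ) : Matrix (Fin 12) (Fin 2) ℂ := Matrix.single 0 1 (-(1 - w))

/-- The lower right block of `Hₙ`, with `w'` in the role of the conjugate of `w`. -/
noncomputable def botD (n : ℕ) (w w' : ℂ) : Matrix (Fin 2) (Fin 2) ℂ :=
  (1 - w) • !![-(n : ℂ), n; n + 1, -(n + 1)] + (1 - w') • !![-(n : ℂ), n + 1; n, -(n + 1)]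

/-- The splitting of the fourteen coordinates into the first twelve and the last two. -/
def splitIdx : Fin 12 ⊕ Fin 2 ≃ Fin 14 := finSumFinEquiv

theorem Smat_inl_inl (n : ℕ) (i j : Fin 12) :
    Smat n (splitIdx (.inl i)) (splitIdx (.inl j)) = Mmat i j := by
  fin_cases i <;> fin_cases j <;> rfl

theorem Smat_inl_inr (n : ℕ) (i : Fin 12) (j : Fin 2) :
    Smat n (splitIdx (.inl i)) (splitIdx (.inr j)) = Matrix.single 0 1 (-1) i j := by
  fin_cases i <;> fin_cases j <;> rfl

theorem Smat_inr_inl (n : ℕ) (i : Fin 2) (j : Fin 12) :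
    Smat n (splitIdx (.inr i)) (splitIdx (.inl j)) = 0 := by
  fin_cases i <;> fin_cases j <;> rfl

theorem Smat_inr_inr (n : ℕ) (i j : Fin 2) :
    Smat n (splitIdx (.inr i)) (splitIdx (.inr j)) =
      !![-(n : ℤ), (n : ℤ); (n : ℤ) + 1, -((n : ℤ) + 1)] i j := by
  fin_cases i <;> fin_cases j <;> rfl

theorem Hn_blocks (n : ℕ) (w : ℂ) :
    (Hn n w).submatrix splitIdx splitIdx =
      fromBlocks (HM w) (offB w) (offB w)ᴴ (botD n w ((starRingEnd ℂ) w)) := by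
  ext i j
  rcases i with i | i <;> rcases j with j | j
  · simp [Hn, HM, SmatC, MmatC, Smat_inl_inl]
  · simp [Hn, SmatC, Smat_inl_inr, Smat_inr_inl, offB, Matrix.single]
  · fin_cases i <;> fin_cases j <;> simp [Hn, SmatC, Smat_inl_inr, Smat_inr_inl, offB, Matrix.single]
  · fin_cases i <;> fin_cases j <;>
      simp [Hn, SmatC, Smat_inr_inr, botD]

theorem schur_eq (n : ℕ) {w w' : ℂ} (hw : w' = (starRingEnd ℂ) w) (A : Matrix (Fin 12) (Fin 12) ℂ) :
    botD n w w' - (offB w)ᴴ * A * offB w =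
      botD n w w' - Matrix.single 1 1 ((1 - w') * (1 - w) * A 0 0) := by
  congr 1
  rw [offB, conjTranspose_single, single_mul_mul_single]
  congr 1
  simp [hw]
  ring

theorem schur_det (n : ℕ) {w w' g : ℂ} (h1 : w * w' = 1) :
    (botD n w w' - Matrix.single 1 1 ((1 - w') * (1 - w) * g)).det =
      (2 - w - w') * (n * ((2 - w - w') * g) - 1) := by
  rw [det_fin_two]
  simp [botD, Matrix.single]
  linear_combination -(1 + n * g * (w + w' - 2)) * h1

theorem P0_eq {z w : ℂ} (hz : z ≠ 0) (hw : w = z ^ 2) : w ^ 6 * P0 z = Del w := by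
  subst hw
  unfold P0 Del
  field_simp
  ring

/-- With `c (H_M⁻¹)₀₀ Δ = -(1 - w) adjCol₀`, this identifies `c (H_M⁻¹)₀₀ P₀` with `P₀ - P₁`. -/
theorem P1_eq {z w : ℂ} (hz : z ≠ 0) (hw : w = z ^ 2) :
    w ^ 6 * (P0 z - P1 z) = - (1 - w) * adjCol w 0 := by
  subst hw
  simp only [P0, P1, adjCol, cons_val_zero]
  field_simp
  ring

theorem botD_isHermitian (n : ℕ) (w : ℂ) : (botD n w ((starRingEnd ℂ) w)).IsHermitian := by
  ext i j
  fin_cases i <;> fin_cases j <;> simp [botD] <;> ring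

/-- Lemma 5.2 of the paper at the level of Seifert matrices: the sign of `F(ω,n)`
determines how the Tristram–Levine signature of `Kₙ` differs from that of `K₀`. -/
theorem stmt11 (z ω : ℂ) (hz : ‖z‖ = 1) (hω : ω = z ^ 2) (hω1 : ω ≠ 1)
    (n : ℕ) (hP : P0 z ≠ 0) :
    (Hn n ω).IsHermitian ∧ (HM ω).IsHermitian ∧ (HM ω).det ≠ 0 ∧
    (2 * ((ω.re : ℂ) - 1) * (1 - (n : ℂ) + (n : ℂ) * P1 z / P0 z)).im = 0 ∧
    ((2 * ((ω.re : ℂ) - 1) * (1 - (n : ℂ) + (n : ℂ) * P1 z / P0 z)).re < 0 →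
      matSig (Hn n ω) = matSig (HM ω)) ∧
    (0 < (2 * ((ω.re : ℂ) - 1) * (1 - (n : ℂ) + (n : ℂ) * P1 z / P0 z)).re →
      matSig (Hn n ω) = matSig (HM ω) + 2 ∨ matSig (Hn n ω) = matSig (HM ω) - 2) := by
  set w' : ℂ := (starRingEnd ℂ) ω with hw'
  have hz0 : z ≠ 0 := by
    rintro rfl
    simp at hz
  have h1 : ω * w' = 1 := by
    rw [hw', Complex.mul_conj', hω, norm_pow, hz]
    simp
  have hω0 : ω ≠ 0 := left_ne_zero_of_mul_eq_one h1
  have hre : 2 * (ω.re : ℂ) = ω + w' := by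
    rw [hw', Complex.add_conj]
    push_cast
    rfl
  have hDel : Del ω ≠ 0 := by
    rw [← P0_eq hz0 hω]
    exact mul_ne_zero (pow_ne_zero _ hω0) hP
  have hH : (Hn n ω).IsHermitian := isHermitian_form _ ω
  have hM : (HM ω).IsHermitian := isHermitian_form _ ω
  have hdet : (HM ω).det ≠ 0 := HM_det_ne_zero hw' h1 hω1 hDel
  have hT : (botD n ω w' - (offB ω)ᴴ * (HM ω)⁻¹ * offB ω).IsHermitian :=
    (botD_isHermitian n ω).sub (isHermitian_conjTranspose_mul_mul _ hM.inv)
  set g : ℂ := (HM ω)⁻¹ 0 0 with hg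
  set F : ℂ := 2 * ((ω.re : ℂ) - 1) * (1 - (n : ℂ) + (n : ℂ) * P1 z / P0 z) with hF
  have hgP : (2 - ω - w') * g * P0 z = P0 z - P1 z := by
    have hinv := HM_inv_zero_zero hw' h1 hω1 hDel
    rw [← P0_eq hz0 hω, ← hg] at hinv
    apply mul_left_cancel₀ (pow_ne_zero 6 hω0)
    rw [P1_eq hz0 hω]
    linear_combination -(1 - ω) * hinv + ω ^ 6 * P0 z * g * (ω - 2) * h1
  have hTF : (botD n ω w' - (offB ω)ᴴ * (HM ω)⁻¹ * offB ω).det = F := by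
    rw [schur_eq n hw', schur_det n h1, hF]
    field_simp
    linear_combination n * (2 - ω - w') * hgP + (P0 z - n * P0 z + n * P1 z) * (-hre)
  have hFim : F.im = 0 := by
    rw [← Complex.conj_eq_iff_im, ← hTF, ← Complex.star_def, ← det_conjTranspose, hT.eq]
  have hFre : (botD n ω w' - (offB ω)ᴴ * (HM ω)⁻¹ * offB ω).det = ((F.re : ℝ) : ℂ) := by
    rw [hTF]
    exact Complex.ext (by simp) (by simp [hFim])
  have hsig := fun h => matSig_schur splitIdx hH hM hdet (Hn_blocks n ω) hT h
  refine ⟨hH, hM, hdet, hFim, fun h => ?_, fun h => ?_⟩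
  · have h0 := matSig_two_of_det_neg hT hFre h
    rw [hsig (by rw [hFre]; exact_mod_cast h.ne), h0, add_zero]
  · rw [hsig (by rw [hFre]; exact_mod_cast h.ne')]
    rcases matSig_two_of_det_pos hT hFre h with h0 | h0 <;> rw [h0]
    · exact Or.inl rfl
    · exact Or.inr rfl
end
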